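/- arXiv:2108.13532 — 2 statements merged into one kernel-verified Lean document; each statement's English description precedes it below -/
import Mathlib

section
/- Let a : ℤ → ℂ satisfy a(0) = 0 and |a(n)| ≤ C·|n|^A for all n ≠ 0, for some constants C ≥ 0 and A ≥ 0. For y > 0 and x ∈ ℝ define F(x, y) = 2·√y · ∑_{n ∈ ℤ, n ≠ 0} a(n) · e^{2πi n x} · K₀(2π|n|y). Then for every Y > 0, ∫_Y^∞ ∫₀¹ y·|F(x,y)|² dx (dy/y²) = (2/π) · ∑_{n ∈ ℤ, n ≠ 0} |a(n)|² · g(2π|n|Y) / |n|, with both sides finite. -/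
open MeasureTheory Complex

/-- The modified Bessel function of the second kind of order `0`:
`K₀(y) = ∫₀^∞ exp(−y cosh t) dt` for `y > 0`. -/
noncomputable def besselK0 (y : ℝ) : ℝ :=
  ∫ t in Set.Ioi (0 : ℝ), Real.exp (-y * Real.cosh t)

/-- The incomplete integral `g(x) = ∫_x^∞ K₀(y)² dy`. -/
noncomputable def gK0 (x : ℝ) : ℝ :=
  ∫ y in Set.Ioi x, (besselK0 y) ^ 2

/-- The K-Bessel Fourier series
`F(x,y) = 2 √y ∑_{n ≠ 0} a(n) e(nx) K₀(2π|n|y)` (the `n = 0` term vanishes as `a 0 = 0`). -/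
noncomputable def besselFourierSeries (a : ℤ → ℂ) (x y : ℝ) : ℂ :=
  2 * (Real.sqrt y : ℂ) * ∑' n : ℤ,
    a n * Complex.exp (2 * Real.pi * Complex.I * (n : ℂ) * (x : ℂ)) *
      (besselK0 (2 * Real.pi * |(n : ℝ)| * y) : ℂ)

theorem aux_meas : Measurable besselK0 := by
  have h : StronglyMeasurable (Function.uncurry fun y t : ℝ => Real.exp (-y * Real.cosh t)) := by
    apply Continuous.stronglyMeasurable
    unfold Function.uncurry
    fun_prop
  exact (h.integral_prod_right (ν := volume.restrict (Set.Ioi 0))).measurable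

theorem aux_nonneg (y : ℝ) : 0 ≤ besselK0 y :=
  integral_nonneg fun t => (Real.exp_pos _).le

theorem aux_cosh (t : ℝ) (ht : 0 ≤ t) : 1 + t ^ 2 / 2 ≤ Real.cosh t := by
  have h1 : t / 2 ≤ Real.sinh (t / 2) := Real.self_le_sinh_iff.2 (by positivity)
  have h2 : Real.cosh t = 1 + 2 * Real.sinh (t / 2) ^ 2 := by
    have := Real.cosh_two_mul (t / 2)
    rw [Real.cosh_sq, show 2 * (t / 2) = t by ring] at this
    linarith
  rw [h2]
  nlinarith

theorem aux_K0_le (y : ℝ) (hy : 0 < y) :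
    besselK0 y ≤ Real.exp (-y) * (√(Real.pi / (y / 2)) / 2) := by
  rw [← integral_gaussian_Ioi, ← integral_const_mul]
  unfold besselK0
  have hi : Integrable (fun t : ℝ => Real.exp (-y) * Real.exp (-(y / 2) * t ^ 2)) :=
    (integrable_exp_neg_mul_sq (by positivity)).const_mul _
  refine integral_mono_of_nonneg (.of_forall fun t => (Real.exp_pos _).le) hi.integrableOn ?_
  filter_upwards [self_mem_ae_restrict measurableSet_Ioi] with t ht
  rw [← Real.exp_add]
  apply Real.exp_le_exp.2
  have := aux_cosh t (le_of_lt ht)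
  nlinarith

theorem aux_K0_le' (n : ℤ) (hn : n ≠ 0) (y : ℝ) (hy : 0 < y) :
    besselK0 (2 * Real.pi * |(n : ℝ)| * y) ≤ Real.exp (-(2 * |(n : ℝ)| * y)) * √(1 / y) := by
  have h1 : (1 : ℝ) ≤ |(n : ℝ)| := by exact_mod_cast Int.one_le_abs hn
  have hp := Real.pi_gt_three
  have hw : 0 < 2 * Real.pi * |(n : ℝ)| * y := by positivity
  refine (aux_K0_le _ hw).trans ?_
  gcongr
  · nlinarith
  · have : √(Real.pi / (2 * Real.pi * |(n : ℝ)| * y / 2)) ≤ √(1 / y) := by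
      apply Real.sqrt_le_sqrt
      rw [div_le_div_iff₀ (by positivity) hy]
      have : y ≤ |(n : ℝ)| * y := by nlinarith
      nlinarith
    have h0 := Real.sqrt_nonneg (Real.pi / (2 * Real.pi * |(n : ℝ)| * y / 2))
    linarith

theorem aux_summable (k : ℕ) (r : ℝ) (hr : 0 < r) :
    Summable fun n : ℤ => |(n : ℝ)| ^ k * Real.exp (-(|(n : ℝ)| * r)) := by
  have h := Real.summable_pow_mul_exp_neg_nat_mul k hr
  refine Summable.of_nat_of_neg ?_ ?_ <;>
  · refine h.congr fun n => ?_
    simp [mul_comm]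

theorem aux_int (m n : ℤ) : (∫ x in (0 : ℝ)..1,
    Complex.exp (2 * Real.pi * Complex.I * (m : ℂ) * (x : ℂ)) *
      (starRingEnd ℂ) (Complex.exp (2 * Real.pi * Complex.I * (n : ℂ) * (x : ℂ)))) =
      if m = n then 1 else 0 := by
  have h : ∀ x : ℝ, Complex.exp (2 * Real.pi * Complex.I * (m : ℂ) * (x : ℂ)) *
      (starRingEnd ℂ) (Complex.exp (2 * Real.pi * Complex.I * (n : ℂ) * (x : ℂ))) =
      Complex.exp ((2 * Real.pi * Complex.I * ((m - n : ℤ) : ℂ)) * (x : ℂ)) := by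
    intro x
    rw [← Complex.exp_conj, ← Complex.exp_add]
    congr 1
    simp [map_ofNat]
    ring
  simp_rw [h]
  split_ifs with hmn
  · simp [hmn]
  · have hc : (2 * Real.pi * Complex.I * ((m - n : ℤ) : ℂ)) ≠ 0 := by
      refine mul_ne_zero Complex.two_pi_I_ne_zero ?_
      exact_mod_cast sub_ne_zero.2 hmn
    rw [integral_exp_mul_complex hc]
    have := Complex.exp_int_mul_two_pi_mul_I (m - n)
    rw [mul_comm] at this
    simp [this, -Int.cast_sub]

theorem aux_norm (n : ℤ) (x : ℝ) :
    ‖Complex.exp (2 * Real.pi * Complex.I * (n : ℂ) * (x : ℂ))‖ = 1 := by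
  rw [show (2 * Real.pi * Complex.I * (n : ℂ) * (x : ℂ)) =
    ((2 * Real.pi * n * x : ℝ) : ℂ) * Complex.I by push_cast; ring]
  exact Complex.norm_exp_ofReal_mul_I _

theorem aux_parseval (c : ℤ → ℂ) (hc : Summable fun n => ‖c n‖) :
    HasSum (fun n => ‖c n‖ ^ 2) (∫ x in (0 : ℝ)..1,
      ‖∑' n : ℤ, c n * Complex.exp (2 * Real.pi * Complex.I * (n : ℂ) * (x : ℂ))‖ ^ 2) := by
  set e : ℤ → ℝ → ℂ := fun n x => Complex.exp (2 * Real.pi * Complex.I * (n : ℂ) * (x : ℂ)) with he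
  have hnorm : ∀ n x, ‖e n x‖ = 1 := aux_norm
  have hcont : ∀ n, Continuous (e n) := fun n => by simp only [he]; fun_prop
  have hs : ∀ x, Summable fun n => ‖c n * e n x‖ := fun x => by simpa [hnorm] using hc
  have hs' : ∀ x, Summable fun n => ‖(starRingEnd ℂ) (c n * e n x)‖ := fun x => by
    simpa [hnorm] using hc
  have hb : Summable fun p : ℤ × ℤ => ‖c p.1‖ * ‖c p.2‖ :=
    hc.mul_of_nonneg hc (fun _ => norm_nonneg _) (fun _ => norm_nonneg _)
  have key := intervalIntegral.hasSum_integral_of_dominated_convergence (a := (0 : ℝ)) (b := 1)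
    (μ := volume) (ι := ℤ × ℤ)
    (F := fun p x => (c p.1 * e p.1 x) * (starRingEnd ℂ) (c p.2 * e p.2 x))
    (f := fun x => (((‖∑' n : ℤ, c n * e n x‖ ^ 2 : ℝ)) : ℂ))
    (fun p _ => ‖c p.1‖ * ‖c p.2‖)
    (fun p => by
      have h1 := hcont p.1
      have h2 := hcont p.2
      apply Continuous.aestronglyMeasurable
      fun_prop)
    (fun p => .of_forall fun x _ => by simp [hnorm])
    (.of_forall fun x _ => hb) (by simp)
    (.of_forall fun x _ => by
      have h := (summable_mul_of_summable_norm (hs x) (hs' x)).hasSum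
      rw [← tsum_mul_tsum_of_summable_norm (hs x) (hs' x)] at h
      rw [← Complex.conj_tsum, Complex.mul_conj, Complex.normSq_eq_norm_sq] at h
      exact h)
  have hval : ∀ p : ℤ × ℤ, (∫ x in (0 : ℝ)..1,
      (c p.1 * e p.1 x) * (starRingEnd ℂ) (c p.2 * e p.2 x)) =
      if p.1 = p.2 then ((‖c p.1‖ ^ 2 : ℝ) : ℂ) else 0 := by
    intro p
    have : ∀ x, (c p.1 * e p.1 x) * (starRingEnd ℂ) (c p.2 * e p.2 x) =
      (c p.1 * (starRingEnd ℂ) (c p.2)) * (e p.1 x * (starRingEnd ℂ) (e p.2 x)) := by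
      intro x; rw [map_mul]; ring
    simp_rw [this]
    rw [intervalIntegral.integral_const_mul, aux_int]
    split_ifs with h
    · rw [← h, Complex.mul_conj, Complex.normSq_eq_norm_sq, mul_one]
    · simp
  simp_rw [hval] at key
  rw [intervalIntegral.integral_ofReal] at key
  have hinj : Function.Injective (fun n : ℤ => (n, n)) := fun a b h => (Prod.ext_iff.1 h).1
  rw [← hinj.hasSum_iff] at key
  · simp only [Function.comp_def, if_true] at key
    have key2 := (Complex.hasSum_ofReal).1 key
    exact key2
  · rintro ⟨m, n⟩ h
    simp only [Set.mem_range, Prod.mk.injEq, not_exists, not_and] at h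
    exact if_neg fun h' => h m rfl h'

theorem aux_gK0 (n : ℤ) (hn : n ≠ 0) (Y : ℝ) :
    (∫ y in Set.Ioi Y, besselK0 (2 * Real.pi * |(n : ℝ)| * y) ^ 2) =
      gK0 (2 * Real.pi * |(n : ℝ)| * Y) / (2 * Real.pi * |(n : ℝ)|) := by
  have hp := Real.pi_pos
  have h1 : (0 : ℝ) < |(n : ℝ)| := by positivity
  rw [MeasureTheory.integral_comp_mul_left_Ioi (fun y => besselK0 y ^ 2) Y (by positivity)]
  rw [gK0, smul_eq_mul, inv_mul_eq_div]

/-- Unfolding/Parseval computation of the cuspidal-zone integral: if `a 0 = 0` and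
`|a(n)| ≤ C|n|^A`, then for every `Y > 0`,
`∫_Y^∞ ∫₀¹ y |F(x,y)|² dx dy/y² = (2/π) ∑_{n ≠ 0} |a(n)|² g(2π|n|Y)/|n|`,
with both sides finite. -/
theorem cuspidal_zone_unfolding (a : ℤ → ℂ) (C A : ℝ) (hC : 0 ≤ C) (hA : 0 ≤ A)
    (ha0 : a 0 = 0) (hbd : ∀ n : ℤ, n ≠ 0 → ‖a n‖ ≤ C * |(n : ℝ)| ^ A)
    (Y : ℝ) (hY : 0 < Y) :
    IntegrableOn
      (fun y : ℝ => (∫ x in (0 : ℝ)..1, y * ‖besselFourierSeries a x y‖ ^ 2) / y ^ 2)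
      (Set.Ioi Y) ∧
    Summable (fun n : ℤ => ‖a n‖ ^ 2 * gK0 (2 * Real.pi * |(n : ℝ)| * Y) / |(n : ℝ)|) ∧
    (∫ y in Set.Ioi Y,
        (∫ x in (0 : ℝ)..1, y * ‖besselFourierSeries a x y‖ ^ 2) / y ^ 2)
      = (2 / Real.pi) *
        ∑' n : ℤ, ‖a n‖ ^ 2 * gK0 (2 * Real.pi * |(n : ℝ)| * Y) / |(n : ℝ)| := by
  have hpi := Real.pi_pos
  obtain ⟨k, hk⟩ := exists_nat_ge A
  have hb : ∀ n : ℤ, ‖a n‖ ≤ C * |(n : ℝ)| ^ k := by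
    intro n
    by_cases hn : n = 0
    · subst hn; rw [ha0, norm_zero]; positivity
    · have h1 : (1 : ℝ) ≤ |(n : ℝ)| := by exact_mod_cast Int.one_le_abs hn
      refine (hbd n hn).trans ?_
      gcongr
      rw [← Real.rpow_natCast]
      exact Real.rpow_le_rpow_of_exponent_le h1 hk
  -- pointwise bounds
  have hle : ∀ (n : ℤ) (y : ℝ), 0 < y → ‖a n‖ * besselK0 (2 * Real.pi * |(n : ℝ)| * y) ≤
      C * |(n : ℝ)| ^ k * (Real.exp (-(2 * |(n : ℝ)| * y)) * √(1 / y)) := by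
    intro n y hy
    by_cases hn : n = 0
    · subst hn; rw [ha0, norm_zero, zero_mul]; positivity
    · exact mul_le_mul (hb n) (aux_K0_le' n hn y hy) (aux_nonneg _) (by positivity)
  set G : ℤ → ℝ → ℝ := fun n y => 4 * (‖a n‖ * besselK0 (2 * Real.pi * |(n : ℝ)| * y)) ^ 2 with hG
  have hpars : ∀ y, 0 < y → HasSum (fun n => G n y)
      ((∫ x in (0 : ℝ)..1, y * ‖besselFourierSeries a x y‖ ^ 2) / y ^ 2) := by
    intro y hy
    have hsum : Summable fun n : ℤ => ‖a n * (besselK0 (2 * Real.pi * |(n : ℝ)| * y) : ℂ)‖ := by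
      refine Summable.of_nonneg_of_le (fun _ => norm_nonneg _) (fun n => ?_)
        (((aux_summable k (2 * y) (by positivity)).mul_left (C * √(1 / y))))
      rw [norm_mul, Complex.norm_real, Real.norm_of_nonneg (aux_nonneg _)]
      refine (hle n y hy).trans (le_of_eq ?_)
      rw [show 2 * |(n : ℝ)| * y = |(n : ℝ)| * (2 * y) by ring]
      ring
    have h := (aux_parseval _ hsum).mul_left 4
    have e1 : (fun n => G n y) = fun n : ℤ =>
        4 * ‖a n * (besselK0 (2 * Real.pi * |(n : ℝ)| * y) : ℂ)‖ ^ 2 := by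
      funext n
      simp only [hG]
      rw [norm_mul, Complex.norm_real, Real.norm_of_nonneg (aux_nonneg _)]
    have e2 : (∫ x in (0 : ℝ)..1, y * ‖besselFourierSeries a x y‖ ^ 2) / y ^ 2 =
        4 * ∫ x in (0 : ℝ)..1, ‖∑' n : ℤ, a n * (besselK0 (2 * Real.pi * |(n : ℝ)| * y) : ℂ) *
          Complex.exp (2 * Real.pi * Complex.I * (n : ℂ) * (x : ℂ))‖ ^ 2 := by
      rw [intervalIntegral.integral_const_mul]
      have : ∀ x : ℝ, ‖besselFourierSeries a x y‖ ^ 2 = (4 * y) *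
        ‖∑' n : ℤ, a n * (besselK0 (2 * Real.pi * |(n : ℝ)| * y) : ℂ) *
          Complex.exp (2 * Real.pi * Complex.I * (n : ℂ) * (x : ℂ))‖ ^ 2 := by
        intro x
        unfold besselFourierSeries
        rw [norm_mul, norm_mul, mul_pow, mul_pow, Complex.norm_real,
          Real.norm_of_nonneg (Real.sqrt_nonneg _), Real.sq_sqrt hy.le]
        congr 2
        · norm_num
        · congr 1
          exact tsum_congr fun n => by ring
      simp_rw [this]
      rw [intervalIntegral.integral_const_mul]
      field_simp
    rw [e1, e2]
    exact h
  -- dominating function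
  set B : ℤ → ℝ := fun n => 4 * C ^ 2 * (1 / Y) * (|(n : ℝ)| ^ (2 * k) * Real.exp (-(|(n : ℝ)| * Y)))
    with hB
  have hBs : Summable B := (aux_summable (2 * k) Y hY).mul_left _
  have hGle : ∀ n y, Y < y → G n y ≤ B n * Real.exp (-y) := by
    intro n y hy
    have hy0 : 0 < y := hY.trans hy
    by_cases hn : n = 0
    · subst hn; simp only [hG, hB, ha0, norm_zero, zero_mul]; 
      have : (0 : ℝ) ≤ 4 * C ^ 2 * (1 / Y) * (|((0 : ℤ) : ℝ)| ^ (2 * k) *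
        Real.exp (-(|((0 : ℤ) : ℝ)| * Y))) * Real.exp (-y) := by positivity
      simpa using this
    have h1 : (1 : ℝ) ≤ |(n : ℝ)| := by exact_mod_cast Int.one_le_abs hn
    have h2 := pow_le_pow_left₀ (mul_nonneg (norm_nonneg _) (aux_nonneg _)) (hle n y hy0) 2
    calc G n y ≤ 4 * (C * |(n : ℝ)| ^ k * (Real.exp (-(2 * |(n : ℝ)| * y)) * √(1 / y))) ^ 2 := by
          simp only [hG]; linarith
      _ = 4 * C ^ 2 * (1 / y) * (|(n : ℝ)| ^ (2 * k) * Real.exp (-(4 * |(n : ℝ)| * y))) := by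
          rw [mul_pow, mul_pow, mul_pow, Real.sq_sqrt (by positivity), ← Real.exp_nat_mul,
            ← pow_mul, mul_comm k 2]
          rw [show ((2 : ℕ) : ℝ) * -(2 * |(n : ℝ)| * y) = -(4 * |(n : ℝ)| * y) by push_cast; ring]
          ring
      _ ≤ 4 * C ^ 2 * (1 / Y) * (|(n : ℝ)| ^ (2 * k) *
            (Real.exp (-(|(n : ℝ)| * Y)) * Real.exp (-y))) := by
          rw [← Real.exp_add]
          gcongr
          nlinarith
      _ = B n * Real.exp (-y) := by simp only [hB]; ring
  have hG0 : ∀ n y, 0 ≤ G n y := fun n y => by simp only [hG]; positivity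
  have hGm : ∀ n, Measurable (G n) := fun n => by
    have := aux_meas
    simp only [hG]; fun_prop
  have hdom : Integrable (fun y => ∑' n, B n * Real.exp (-y)) (volume.restrict (Set.Ioi Y)) := by
    simp_rw [tsum_mul_right]
    exact (integrableOn_exp_neg_Ioi Y).const_mul _
  have hae : ∀ᵐ y ∂(volume.restrict (Set.Ioi Y)), Y < y := self_mem_ae_restrict measurableSet_Ioi
  have key := MeasureTheory.hasSum_integral_of_dominated_convergence
    (μ := volume.restrict (Set.Ioi Y)) (F := G)
    (f := fun y => (∫ x in (0 : ℝ)..1, y * ‖besselFourierSeries a x y‖ ^ 2) / y ^ 2)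
    (fun n y => B n * Real.exp (-y))
    (fun n => (hGm n).aestronglyMeasurable)
    (fun n => by
      filter_upwards [hae] with y hy
      rw [Real.norm_of_nonneg (hG0 n y)]
      exact hGle n y hy)
    (.of_forall fun y => hBs.mul_right _) hdom
    (by filter_upwards [hae] with y hy using hpars y (hY.trans hy))
  have hval : ∀ n, (∫ y in Set.Ioi Y, G n y) =
      (2 / Real.pi) * (‖a n‖ ^ 2 * gK0 (2 * Real.pi * |(n : ℝ)| * Y) / |(n : ℝ)|) := by
    intro n
    by_cases hn : n = 0
    · subst hn; simp [hG, ha0]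
    have h1 : (0 : ℝ) < |(n : ℝ)| := by positivity
    have : ∀ y, G n y = (4 * ‖a n‖ ^ 2) * besselK0 (2 * Real.pi * |(n : ℝ)| * y) ^ 2 := by
      intro y; simp only [hG]; ring
    simp_rw [this]
    rw [integral_const_mul, aux_gK0 n hn]
    field_simp
    ring
  simp_rw [hval] at key
  have hne : (2 / Real.pi) ≠ 0 := by positivity
  refine ⟨?_, (summable_mul_left_iff hne).1 key.summable, ?_⟩
  · refine Integrable.mono' hdom ?_ ?_
    · have hm : Measurable fun y => ∑' n, G n y := Measurable.tsum hGm
      refine hm.aestronglyMeasurable.congr ?_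
      filter_upwards [hae] with y hy using (hpars y (hY.trans hy)).tsum_eq
    · filter_upwards [hae] with y hy
      have h := hpars y (hY.trans hy)
      rw [Real.norm_of_nonneg (h.nonneg fun n => hG0 n y)]
      exact hasSum_le (fun n => hGle n y hy) h (hBs.mul_right _).hasSum
  · rw [← key.tsum_eq, tsum_mul_left]
end

section
/- Fix a real number T. There exists a constant C = C(T) > 0 such that for every integer N ≥ 3 and every primitive Dirichlet character χ modulo N for which GRH(χ) holds, one has L(1 + 2iT, χ) ≠ 0 and |L″(1 + 2iT, χ) / L(1 + 2iT, χ)| ≤ C · (log log N)². -/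
open Complex

/-- GRH for a single Dirichlet L-function: every zero of `L(s, χ)` in the critical strip
`0 < Re(s) < 1` lies on the critical line `Re(s) = 1/2`. -/
def GRHFor {N : ℕ} [NeZero N] (χ : DirichletCharacter ℂ N) : Prop :=
  ∀ s : ℂ, 0 < s.re → s.re < 1 → DirichletCharacter.LFunction χ s = 0 → s.re = 1 / 2


lemma charsum_bound {N : ℕ} [NeZero N] (χ : DirichletCharacter ℂ N) (hχ : χ ≠ 1) (n : ℕ) :
    ‖∑ k ∈ Finset.Icc 1 n, χ (k : ZMod N)‖ ≤ N + 1 := by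
  have hper : ∀ m : ℕ, ∑ k ∈ Finset.range N, χ ((k + N * m : ℕ) : ZMod N) = 0 := by
    intro m
    rw [← MulChar.sum_eq_zero_of_ne_one hχ]
    simp only [Nat.cast_add, Nat.cast_mul, CharP.cast_eq_zero, zero_mul, add_zero]
    refine Finset.sum_bij' (fun k _ => (k : ZMod N)) (fun a _ => a.val) ?_ ?_ ?_ ?_ ?_
    · simp
    · intro a _; simp [ZMod.val_lt]
    · intro a ha; exact ZMod.val_cast_of_lt (Finset.mem_range.mp ha)
    · simp
    · simp
  have hblock : ∀ m : ℕ, ∑ k ∈ Finset.range (N * m), χ (k : ZMod N) = 0 := by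
    intro m
    induction m with
    | zero => simp
    | succ m ih =>
      rw [Nat.mul_succ, Finset.sum_range_add, ih, zero_add]
      simpa [add_comm] using hper m
  have hr : ∀ n : ℕ, ‖∑ k ∈ Finset.range n, χ (k : ZMod N)‖ ≤ N := by
    intro n
    conv_lhs => rw [← Nat.div_add_mod n N, Finset.sum_range_add, hblock, zero_add]
    refine (norm_sum_le _ _).trans ?_
    refine (Finset.sum_le_card_nsmul _ _ 1 fun k _ => χ.norm_le_one _).trans ?_
    simp
    exact_mod_cast (Nat.mod_lt n (NeZero.pos N)).le
  have : ∑ k ∈ Finset.Icc 1 n, χ (k : ZMod N) = (∑ k ∈ Finset.range (n+1), χ (k : ZMod N)) - χ 0 := by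
    rw [Finset.range_eq_Ico, Finset.sum_eq_sum_Ico_succ_bot (by omega)]
    simp; rfl
  rw [this]
  exact (norm_sub_le _ _).trans (add_le_add (hr _) (χ.norm_le_one _))

open Set Filter Topology MeasureTheory in
lemma L_bound {N : ℕ} [NeZero N] (χ : DirichletCharacter ℂ N) (hχ : χ ≠ 1) (s : ℂ)
    (hs : 0 < s.re) :
    ‖DirichletCharacter.LFunction χ s‖ ≤ ‖s‖ * ((N + 1) / s.re) := by
  set S : ℝ → ℂ := fun t => ∑ k ∈ Finset.Icc 1 ⌊t⌋₊, χ (k : ZMod N) with hS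
  have hSb : ∀ t, ‖S t‖ ≤ N + 1 := fun t => charsum_bound χ hχ _
  have hS0 : ∀ t < 1, S t = 0 := by
    intro t ht
    have : ⌊t⌋₊ = 0 := Nat.floor_eq_zero.mpr ht
    simp [hS, this]
  have hmeas : Measurable S :=
    (measurable_from_nat (f := fun n : ℕ => ∑ k ∈ Finset.Icc 1 n, χ (k : ZMod N))).comp
      Nat.measurable_floor
  have hloc : LocallyIntegrableOn S (Ioi 0) := by
    refine LocallyIntegrable.locallyIntegrableOn ?_ _
    refine (locallyIntegrable_const ((N:ℝ) + 1)).mono hmeas.aestronglyMeasurable ?_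
    refine ae_of_all _ fun t => ?_
    rw [Real.norm_of_nonneg (by positivity)]; exact hSb t
  have hdiff : ∀ z : ℂ, 0 < z.re → DifferentiableAt ℂ (fun z => z * mellin S (-z)) z := by
    intro z hz
    refine differentiableAt_id.mul (DifferentiableAt.comp (g := mellin S) (f := fun z : ℂ => -z) z ?_ differentiableAt_id.neg)
    refine mellin_differentiableAt_of_isBigO_rpow (a := 0) (b := -z.re - 1) hloc ?_ ?_ ?_ ?_
    · simp only [neg_zero, Real.rpow_zero]
      refine Asymptotics.IsBigO.of_bound (N + 1) (Eventually.of_forall fun t => ?_)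
      simpa using hSb t
    · simpa using hz
    · refine Asymptotics.IsBigO.of_bound 1 ?_
      filter_upwards [mem_nhdsWithin_of_mem_nhds (Iio_mem_nhds (zero_lt_one))] with t ht
      rw [hS0 t ht]; simp
    · simp
  have hmel : ∀ z : ℂ, mellin S (-z) = ∫ t in Ioi (1:ℝ), S t * (t:ℂ) ^ (-(z+1)) := by
    intro z
    unfold mellin
    rw [← integral_indicator measurableSet_Ioi, ← integral_indicator measurableSet_Ioi]
    refine integral_congr_ae ?_
    have : ∀ᵐ t : ℝ, t ≠ 1 := by simp [ae_iff, measure_singleton]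
    filter_upwards [this] with t ht
    by_cases h1 : 1 < t
    · rw [indicator_of_mem (show t ∈ Ioi (1:ℝ) from h1), indicator_of_mem (show t ∈ Ioi (0:ℝ) from lt_trans one_pos h1)]
      rw [smul_eq_mul, mul_comm]; congr 2; ring
    · rw [indicator_of_notMem (show t ∉ Ioi (1:ℝ) from h1)]
      have : S t = 0 := hS0 t (lt_of_le_of_ne (not_lt.mp h1) ht)
      simp [indicator, this]
  have hO : (fun n : ℕ ↦ ∑ k ∈ Finset.Icc 1 n, χ (k : ZMod N)) =O[atTop] fun n ↦ (n : ℝ) ^ (0:ℝ) := by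
    simp only [Real.rpow_zero]
    refine Asymptotics.IsBigO.of_bound (N + 1) (Eventually.of_forall fun t => ?_)
    simpa using charsum_bound χ hχ t
  have heq1 : ∀ z : ℂ, 1 < z.re → DirichletCharacter.LFunction χ z = z * mellin S (-z) := by
    intro z hz
    rw [DirichletCharacter.LFunction_eq_LSeries χ hz, hmel]
    exact LSeries_eq_mul_integral (fun n => χ n) le_rfl (by linarith)
      (DirichletCharacter.LSeriesSummable_of_one_lt_re χ hz) hO
  have hopen : IsOpen {z : ℂ | 0 < z.re} := isOpen_lt continuous_const continuous_re
  have heq : EqOn (DirichletCharacter.LFunction χ) (fun z => z * mellin S (-z)) {z : ℂ | 0 < z.re} := by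
    refine AnalyticOnNhd.eqOn_of_preconnected_of_eventuallyEq (𝕜 := ℂ) (z₀ := 2) ?_ ?_ ?_ ?_ ?_
    · exact DifferentiableOn.analyticOnNhd
        (DirichletCharacter.differentiable_LFunction hχ).differentiableOn hopen
    · exact DifferentiableOn.analyticOnNhd
        (fun z hz => (hdiff z hz).differentiableWithinAt) hopen
    · exact (convex_halfSpace_re_gt 0).isPreconnected
    · simp
    · filter_upwards [(isOpen_lt continuous_const continuous_re).mem_nhds
        (show (2:ℂ) ∈ {z : ℂ | 1 < z.re} by simp)] with z hz using heq1 z hz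
  rw [heq hs]
  simp only [norm_mul]
  gcongr
  rw [hmel]
  calc ‖∫ t in Ioi (1:ℝ), S t * (t:ℂ) ^ (-(s+1))‖
      ≤ ∫ t in Ioi (1:ℝ), (N + 1) * t ^ (-s.re - 1) := by
        refine norm_integral_le_of_norm_le ?_ ?_
        · exact (integrableOn_Ioi_rpow_of_lt (by linarith) one_pos).const_mul _
        · refine (ae_restrict_mem measurableSet_Ioi).mono fun t ht => ?_
          have ht0 : 0 < t := lt_trans one_pos ht
          rw [norm_mul, norm_cpow_eq_rpow_re_of_pos ht0]
          have : (-(s+1)).re = -s.re - 1 := by simp; ring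
          rw [this]
          gcongr
          exact hSb t
    _ = (N + 1) / s.re := by
        rw [integral_const_mul, integral_Ioi_rpow_of_lt (by linarith) one_pos]
        simp; field_simp

open ArithmeticFunction LSeries in
lemma Lambda_bound : ∃ K : ℝ, 0 < K ∧ ∀ δ : ℝ, 0 < δ → δ ≤ 1 →
    ∑' n : ℕ, ‖LSeries.term (fun n => (Λ n : ℂ)) ((1 + δ : ℝ) : ℂ) n‖ ≤ K / δ := by
  have hc := ArithmeticFunction.vonMangoldt.continuousOn_LFunctionResidueClassAux (q := 1) 1
  have hc2 : ContinuousOn (fun x : ℝ => vonMangoldt.LFunctionResidueClassAux (q := 1) 1 (x : ℂ))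
      (Set.Icc 1 2) := by
    refine hc.comp continuous_ofReal.continuousOn fun x hx => ?_
    simpa using hx.1
  obtain ⟨B, hB⟩ := isCompact_Icc.exists_bound_of_continuousOn hc2
  refine ⟨|B| + 1, by positivity, fun δ h0 h1 => ?_⟩
  have hs : 1 < (((1 + δ : ℝ) : ℂ)).re := by rw [ofReal_re]; linarith
  have e := vonMangoldt.eqOn_LFunctionResidueClassAux (q := 1) (a := 1) isUnit_one hs
  have hres : (fun n => (vonMangoldt.residueClass (1 : ZMod 1) n : ℂ)) = fun n => (Λ n : ℂ) := by
    funext n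
    simp [vonMangoldt.residueClass, Set.indicator, Subsingleton.elim (n : ZMod 1) 1]
  simp only [hres] at e
  have hreal : LSeries (fun n => (Λ n : ℂ)) ((1 + δ : ℝ) : ℂ) =
      ((∑' n : ℕ, ‖LSeries.term (fun n => (Λ n : ℂ)) ((1 + δ : ℝ) : ℂ) n‖ : ℝ) : ℂ) := by
    rw [LSeries, ofReal_tsum]
    refine tsum_congr fun n => ?_
    rw [norm_term_eq, LSeries.term_def]
    split_ifs with h
    · simp
    · rw [ofReal_re, norm_real, Real.norm_of_nonneg vonMangoldt_nonneg, ofReal_div, ofReal_cpow (by positivity)]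
      simp
  have hb := hB (1 + δ) ⟨by linarith, by linarith⟩
  rw [e, hreal] at hb
  have : ((Nat.totient 1 : ℂ)⁻¹ / (((1 + δ : ℝ) : ℂ) - 1)) = ((1 / δ : ℝ) : ℂ) := by
    simp
  rw [this, ← ofReal_sub, norm_real, Real.norm_eq_abs] at hb
  have h2 := (abs_le.mp hb).2
  have h3 : |B| ≤ |B| / δ := by rw [le_div_iff₀ h0]; nlinarith [abs_nonneg B]
  have := le_abs_self B
  rw [add_div]; linarith

open ArithmeticFunction LSeries DirichletCharacter in
lemma F_bound : ∃ K : ℝ, 0 < K ∧ ∀ (N : ℕ) [NeZero N] (χ : DirichletCharacter ℂ N) (s : ℂ)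
    (δ : ℝ), 0 < δ → δ ≤ 1 → 1 + δ ≤ s.re →
    ‖deriv (DirichletCharacter.LFunction χ) s / DirichletCharacter.LFunction χ s‖ ≤ K / δ := by
  obtain ⟨K, hK, h⟩ := Lambda_bound
  refine ⟨K, hK, fun N _ χ s δ h0 h1 hs => ?_⟩
  refine le_trans ?_ (h δ h0 h1)
  have hs1 : 1 < s.re := by linarith
  have e := LSeries_twist_vonMangoldt_eq χ hs1
  rw [deriv_LFunction_eq_deriv_LSeries _ hs1, LFunction_eq_LSeries _ hs1, ← norm_neg, ← neg_div,
    ← e]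
  have hsum := LSeriesSummable_twist_vonMangoldt χ hs1
  refine (norm_tsum_le_tsum_norm hsum.norm).trans ?_
  refine hsum.norm.tsum_le_tsum (fun n => ?_) (LSeriesSummable_vonMangoldt (s := ((1 + δ : ℝ) : ℂ)) (by rw [ofReal_re]; linarith)).norm
  refine (norm_term_le_of_re_le_re _ (s := ((1 + δ : ℝ) : ℂ)) (by rw [ofReal_re]; exact hs) n).trans ?_
  refine norm_term_le _ ?_
  simp only [Pi.mul_apply, norm_mul]
  exact mul_le_of_le_one_left (norm_nonneg _) (χ.norm_le_one _)

open ArithmeticFunction LSeries DirichletCharacter in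
lemma L_two_bound : ∃ K : ℝ, 0 < K ∧ ∀ (N : ℕ) [NeZero N] (χ : DirichletCharacter ℂ N) (s : ℂ),
    s.re = 2 → 1 ≤ K * ‖DirichletCharacter.LFunction χ s‖ := by
  have h2 : 1 < (2:ℂ).re := by simp
  have hS : LSeriesSummable 1 2 := LSeriesSummable_one_iff.mpr h2
  refine ⟨∑' n, ‖LSeries.term 1 2 n‖ + 1, ?_, fun N _ χ s hs => ?_⟩
  · have : 0 ≤ ∑' n, ‖LSeries.term 1 2 n‖ := tsum_nonneg fun _ => norm_nonneg _
    linarith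
  have hs1 : 1 < s.re := by linarith
  have e := DirichletCharacter.LSeries.mul_mu_eq_one χ hs1
  rw [LFunction_eq_LSeries _ hs1]
  have := congrArg norm e
  rw [norm_mul, norm_one, mul_comm] at this
  rw [← this]
  gcongr
  have hb : ∀ n, ‖LSeries.term ((fun n : ℕ => χ n) * (fun n : ℕ => ((ArithmeticFunction.moebius n : ℤ) : ℂ))) s n‖ ≤ ‖LSeries.term 1 2 n‖ := by
    intro n
    refine (norm_term_le_of_re_le_re _ (s := 2) (by simp [hs]) n).trans (norm_term_le _ ?_)
    simp only [Pi.mul_apply, norm_mul, Pi.one_apply, norm_one]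
    refine mul_le_one₀ (χ.norm_le_one _) (norm_nonneg _) ?_
    rw [norm_intCast]; exact_mod_cast abs_moebius_le_one
  have hsum : Summable fun n => ‖LSeries.term ((fun n : ℕ => χ n) * (fun n : ℕ => ((ArithmeticFunction.moebius n : ℤ) : ℂ))) s n‖ :=
    Summable.of_nonneg_of_le (fun _ => norm_nonneg _) hb hS.norm
  refine (norm_tsum_le_tsum_norm hsum).trans ((hsum.tsum_le_tsum hb hS.norm).trans (by linarith))

open Metric in
lemma logderiv_bound (f : ℂ → ℂ) (c : ℂ) (M : ℝ) (hM : 0 < M) (hf : Differentiable ℂ f)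
    (h0 : ∀ z ∈ ball c (7/5), f z ≠ 0)
    (hb : ∀ z ∈ ball c (7/5), ‖f z‖ ≤ Real.exp M * ‖f c‖) (z : ℂ) (hz : dist z c ≤ 5/4) :
    ‖deriv f z / f z‖ ≤ 520 * M := by
  have hdF : DifferentiableOn ℂ (fun z => deriv f z / f z) (ball c (7/5)) := by
    refine DifferentiableOn.div ?_ hf.differentiableOn h0
    exact hf.differentiableOn.deriv isOpen_ball
  obtain ⟨g, hgc, hg⟩ := hdF.isExactOn_ball.with_val_at c 0
  have hcm : c ∈ ball c (7/5) := mem_ball_self (by norm_num)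
  have hfc : f c ≠ 0 := h0 c hcm
  -- f = f c * exp g
  have hexp : ∀ w ∈ ball c (7/5), f w = f c * exp (g w) := by
    intro w hw
    have hd : ∀ x ∈ ball c (7/5), HasDerivAt (fun x => f x * exp (-g x)) 0 x := by
      intro x hx
      have h1 := (hf x).hasDerivAt.mul ((hg x hx).neg.cexp)
      refine h1.congr_deriv ?_
      have := h0 x hx
      field_simp
      simp
    have := (convex_ball c (7/5)).is_const_of_fderivWithin_eq_zero (𝕜 := ℂ)
      (f := fun x => f x * exp (-g x)) (fun x hx => (hd x hx).differentiableAt.differentiableWithinAt)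
      (fun x hx => by
        rw [fderivWithin_of_isOpen isOpen_ball hx]
        ext
        simp [(hd x hx).deriv]) hw hcm
    simp only [hgc, neg_zero, exp_zero, mul_one] at this
    rw [← this, mul_assoc, ← exp_add]; simp
  have hre : ∀ w ∈ ball c (7/5), (g w).re ≤ M := by
    intro w hw
    have h1 := hb w hw
    rw [hexp w hw, norm_mul, norm_exp, mul_comm] at h1
    exact Real.exp_le_exp.mp (le_of_mul_le_mul_right h1 (norm_pos_iff.mpr hfc))
  have hgd : DifferentiableOn ℂ g (ball c (7/5)) := fun x hx =>
    (hg x hx).differentiableAt.differentiableWithinAt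
  have hbc : ∀ w, dist w c ≤ 13/10 → ‖g w‖ ≤ 26 * M := by
    intro w hw
    have hmaps : ∀ x ∈ ball (0:ℂ) (7/5), c + x ∈ ball c (7/5) := by
      intro x hx; simpa using hx
    have hn : ‖w - c‖ ≤ 13/10 := by rwa [← dist_eq_norm]
    have := borelCaratheodory_zero (f := fun x => g (c + x)) (R := 7/5) (z := w - c) hM
      (hgd.comp (by fun_prop) hmaps) (fun x hx => hre _ (hmaps x hx)) (by norm_num)
      (by rw [mem_ball_zero_iff]; linarith) (by simpa using hgc)
    simp only [add_sub_cancel] at this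
    refine this.trans ?_
    rw [div_le_iff₀ (by linarith)]
    nlinarith [norm_nonneg (w - c)]
  have hzm : z ∈ ball c (7/5) := by rw [mem_ball]; linarith
  rw [← (hg z hzm).deriv]
  have hsub : closedBall z (1/20) ⊆ ball c (7/5) := by
    refine closedBall_subset_ball' ?_
    linarith
  have := norm_deriv_le_of_forall_mem_sphere_norm_le (f := g) (c := z) (R := 1/20) (C := 26 * M)
    (by norm_num) ?_ ?_
  · refine this.trans (le_of_eq ?_); ring
  · exact (hgd.mono hsub).diffContOnCl_ball subset_rfl
  · intro w hw
    refine hbc w ((dist_triangle w z c).trans ?_)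
    rw [mem_sphere.mp hw]; linarith

open Metric Complex.HadamardThreeLines in
lemma three_circles (F : ℂ → ℂ) (c : ℂ) (R r1 r3 M1 M3 : ℝ) (hF : DifferentiableOn ℂ F (ball c R))
    (h1 : 0 < r1) (h13 : r1 < r3) (h3 : r3 < R)
    (hM1 : ∀ z, dist z c = r1 → ‖F z‖ ≤ M1) (hM3 : ∀ z, dist z c ≤ r3 → ‖F z‖ ≤ M3)
    (z : ℂ) (hz1 : r1 ≤ dist z c) (hz3 : dist z c ≤ r3) :
    ‖F z‖ ≤ M1 ^ (1 - (Real.log (dist z c) - Real.log r1) / (Real.log r3 - Real.log r1)) *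
      M3 ^ ((Real.log (dist z c) - Real.log r1) / (Real.log r3 - Real.log r1)) := by
  have hp : 0 < dist z c := by linarith
  have hzc : z - c ≠ 0 := by rw [sub_ne_zero]; exact dist_pos.mp hp
  have hdist : ∀ w : ℂ, dist (c + exp w) c = Real.exp w.re := by
    intro w; rw [dist_eq_norm]; simp [norm_exp]
  have hle3 : ∀ w ∈ verticalClosedStrip (Real.log r1) (Real.log r3), dist (c + exp w) c ≤ r3 := by
    intro w hw
    rw [hdist, ← Real.le_log_iff_exp_le (by linarith)]
    exact hw.2
  have hre : (log (z - c)).re = Real.log (dist z c) := by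
    rw [log_re, dist_eq_norm]
  have := norm_le_interp_of_mem_verticalClosedStrip' (f := fun w => F (c + exp w))
    (z := log (z - c)) (a := M1) (b := M3) (l := Real.log r1) (u := Real.log r3)
    (Real.log_lt_log h1 h13) ?_ ?_ ?_ ?_ ?_
  · rw [exp_log hzc, hre] at this
    simpa using this
  · show (log (z - c)).re ∈ Set.Icc _ _
    rw [hre]
    exact ⟨Real.log_le_log h1 hz1, Real.log_le_log hp hz3⟩
  · have hd : DifferentiableOn ℂ (fun w => F (c + exp w))
        (verticalClosedStrip (Real.log r1) (Real.log r3)) := by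
      refine hF.comp (by fun_prop) fun w hw => ?_
      rw [mem_ball]
      exact (hle3 w hw).trans_lt h3
    refine (hd.mono ?_).diffContOnCl
    refine closure_minimal ?_ ?_
    · intro w hw; exact ⟨hw.1.le, hw.2.le⟩
    · exact isClosed_Icc.preimage continuous_re
  · refine ⟨M3, ?_⟩
    rintro _ ⟨w, hw, rfl⟩
    exact hM3 _ (hle3 w hw)
  · intro w hw
    refine hM1 _ ?_
    rw [hdist, show w.re = Real.log r1 from hw, Real.exp_log h1]
  · intro w hw
    refine hM3 _ ?_
    rw [hdist, show w.re = Real.log r3 from hw, Real.exp_log (by linarith)]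

lemma interp_num (l D δ d M1 : ℝ) (hl : 0 < l) (hD : 1 ≤ D) (hδ : δ = 1 / (8 * (1 + l)))
    (hd1 : 1 - δ ≤ d) (hd2 : d ≤ 1 + δ) (hM1 : 1 ≤ M1) :
    M1 ^ (1 - (Real.log d - Real.log (1 - δ)) / (Real.log (5/4) - Real.log (1 - δ))) *
      (D * Real.exp l) ^ ((Real.log d - Real.log (1 - δ)) / (Real.log (5/4) - Real.log (1 - δ)))
      ≤ M1 * Real.exp (2 * Real.log D + 2) := by
  have hδ0 : 0 < δ := by rw [hδ]; positivity
  have hδ8 : δ * (1 + l) = 1 / 8 := by rw [hδ]; field_simp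
  have hδ1 : δ ≤ 1 / 8 := by nlinarith
  have hnum0 : 0 ≤ Real.log d - Real.log (1 - δ) :=
    sub_nonneg.mpr (Real.log_le_log (by linarith) hd1)
  have hnum : Real.log d - Real.log (1 - δ) ≤ 3 * δ := by
    rw [← Real.log_div (by linarith) (by linarith)]
    refine (Real.log_le_sub_one_of_pos (div_pos (by linarith) (by linarith))).trans ?_
    rw [sub_le_iff_le_add, div_le_iff₀ (by linarith)]
    nlinarith
  have hden : 1 / 5 ≤ Real.log (5/4) - Real.log (1 - δ) := by
    have h1 : Real.log (1 - δ) ≤ 0 := Real.log_nonpos (by linarith) (by linarith)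
    have h2 := Real.one_sub_inv_le_log_of_pos (show (0:ℝ) < 5/4 by norm_num)
    norm_num at h2
    linarith
  set θ := (Real.log d - Real.log (1 - δ)) / (Real.log (5/4) - Real.log (1 - δ)) with hθ
  have hθ0 : 0 ≤ θ := div_nonneg hnum0 (by linarith)
  have hθ1 : θ ≤ 15 * δ := by
    rw [hθ, div_le_iff₀ (by linarith)]
    nlinarith
  have hlogD : 0 ≤ Real.log D := Real.log_nonneg hD
  refine mul_le_mul ?_ ?_ (by positivity) (by linarith)
  · calc M1 ^ (1 - θ) ≤ M1 ^ (1:ℝ) := Real.rpow_le_rpow_of_exponent_le hM1 (by linarith)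
      _ = M1 := Real.rpow_one _
  · rw [Real.rpow_def_of_pos (by positivity), Real.log_mul (by positivity) (by positivity),
      Real.log_exp]
    refine Real.exp_le_exp.mpr ?_
    have h1 : θ * (1 + l) ≤ 2 := by nlinarith
    have h2 : θ ≤ 2 := by nlinarith
    have h3 : θ * l ≤ 2 := by nlinarith
    nlinarith

open Metric in
/-- Under GRH, for primitive `χ` mod `N`, the ratio `L″/L` at `s = 1 + 2iT` is
`O_T((log log N)²)`. -/
theorem second_log_deriv_L_bound_on_GRH (T : ℝ) :
    ∃ C : ℝ, 0 < C ∧ ∀ (N : ℕ) [NeZero N], 3 ≤ N →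
      ∀ χ : DirichletCharacter ℂ N, χ.IsPrimitive → GRHFor χ →
        DirichletCharacter.LFunction χ (1 + 2 * Complex.I * (T : ℂ)) ≠ 0 ∧
        ‖iteratedDeriv 2 (DirichletCharacter.LFunction χ) (1 + 2 * Complex.I * (T : ℂ)) /
            DirichletCharacter.LFunction χ (1 + 2 * Complex.I * (T : ℂ))‖
          ≤ C * Real.log (Real.log N) ^ 2 := by
  obtain ⟨K1, hK1, hFb⟩ := F_bound
  obtain ⟨K2, hK2, hL2⟩ := L_two_bound
  set c : ℂ := 2 + 2 * Complex.I * (T : ℂ) with hc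
  set s1 : ℂ := 1 + 2 * Complex.I * (T : ℂ) with hs1
  have hcre : c.re = 2 := by simp [hc]
  have hs1re : s1.re = 1 := by simp [hs1]
  have hs1c : dist s1 c = 1 := by
    rw [dist_eq_norm, show s1 - c = -1 by rw [hs1, hc]; ring]; simp
  set A : ℝ := ‖c‖ + 7/5 with hA
  have hA0 : 0 < A := by positivity
  set B : ℝ := 4 * A * K2 with hB
  have hB0 : 0 < B := by positivity
  set D : ℝ := 520 * (B + 1) with hD
  have hD1 : 1 ≤ D := by rw [hD]; linarith
  set P : ℝ := (K1 + 1) * Real.exp (2 * Real.log D + 2) with hP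
  have hP0 : 0 < P := by positivity
  have hlog3 : 1 < Real.log 3 := by
    rw [Real.lt_log_iff_exp_lt (by norm_num)]
    exact Real.exp_one_lt_three
  set l0 : ℝ := Real.log (Real.log 3) with hl0
  have hl0p : 0 < l0 := Real.log_pos hlog3
  refine ⟨(P + P ^ 2) * (64 * (1 + 1 / l0) ^ 2), by positivity, ?_⟩
  intro N _ hN χ hχp hG
  have hN3 : (3:ℝ) ≤ N := by exact_mod_cast hN
  have hχ : χ ≠ 1 := by
    rintro rfl
    have h1 : (1 : DirichletCharacter ℂ N).conductor = N := hχp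
    rw [DirichletCharacter.conductor_one] at h1
    omega
  set L := DirichletCharacter.LFunction χ with hL
  have hLd : Differentiable ℂ L := DirichletCharacter.differentiable_LFunction hχ
  have hne : ∀ s : ℂ, 1/2 < s.re → L s ≠ 0 := by
    intro s hs h
    by_cases h1 : s.re < 1
    · have := hG s (by linarith) h1 h
      linarith
    · exact DirichletCharacter.LFunction_ne_zero_of_one_le_re χ (.inl hχ) (not_lt.mp h1) h
  have hrele : ∀ z : ℂ, 2 - dist z c ≤ z.re := by
    intro z
    have := abs_re_le_norm (z - c)
    rw [← dist_eq_norm, sub_re, hcre] at this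
    linarith [(abs_le.mp this).1]
  have hlogN : Real.log 3 ≤ Real.log N := Real.log_le_log (by norm_num) hN3
  set l : ℝ := Real.log (Real.log N) with hl
  have hll : l0 ≤ l := Real.log_le_log (by linarith) hlogN
  have hlp : 0 < l := by linarith
  have hexpl : Real.exp l = Real.log N := Real.exp_log (by linarith)
  have hneb : ∀ z ∈ ball c (7/5), L z ≠ 0 := by
    intro z hz
    have := hrele z
    rw [mem_ball] at hz
    exact hne z (by linarith)
  set F : ℂ → ℂ := fun z => deriv L z / L z with hF
  have hFd : DifferentiableOn ℂ F (ball c (7/5)) :=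
    DifferentiableOn.div (hLd.differentiableOn.deriv isOpen_ball) hLd.differentiableOn hneb
  have hM3 : ∀ z, dist z c ≤ 5/4 → ‖F z‖ ≤ D * Real.exp l := by
    intro z hz
    have h := logderiv_bound L c (B + Real.log N) (by linarith) hLd hneb ?_ z hz
    · refine h.trans ?_
      rw [hexpl, hD]
      nlinarith
    · intro w hw
      rw [mem_ball] at hw
      have hwre : 3/5 ≤ w.re := by have := hrele w; linarith
      have hwn : ‖w‖ ≤ A := by
        have := norm_sub_norm_le w c
        rw [← dist_eq_norm] at this
        linarith
      calc ‖L w‖ ≤ ‖w‖ * ((N + 1) / w.re) := L_bound χ hχ w (by linarith)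
        _ ≤ A * (4 * N) := by
            gcongr
            rw [div_le_iff₀ (by linarith)]
            nlinarith
        _ ≤ A * (4 * N) * (K2 * ‖L c‖) := le_mul_of_one_le_right (by positivity) (hL2 N χ c hcre)
        _ = B * N * ‖L c‖ := by rw [hB]; ring
        _ ≤ Real.exp (B + Real.log N) * ‖L c‖ := by
            rw [Real.exp_add, Real.exp_log (by linarith)]
            gcongr
            linarith [Real.add_one_le_exp B]
  set δ : ℝ := 1 / (8 * (1 + l)) with hδ
  have hδ0 : 0 < δ := by positivity
  have hδ8 : δ * (1 + l) = 1 / 8 := by rw [hδ]; field_simp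
  have hδ1 : δ ≤ 1 / 8 := by nlinarith
  have hFsmall : ∀ z, dist z c ≤ 1 - δ → ‖F z‖ ≤ (K1 + 1) / δ := by
    intro z hz
    have := hrele z
    refine (hFb N χ z δ hδ0 (by linarith) (by linarith)).trans ?_
    gcongr; linarith
  have hFall : ∀ z, dist z c ≤ 1 + δ → ‖F z‖ ≤ P / δ := by
    intro z hz
    have hPe : P / δ = (K1 + 1) / δ * Real.exp (2 * Real.log D + 2) := by rw [hP]; ring
    have hM1 : 1 ≤ (K1 + 1) / δ := by rw [le_div_iff₀ hδ0]; linarith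
    rw [hPe]
    by_cases h : dist z c ≤ 1 - δ
    · refine (hFsmall z h).trans (le_mul_of_one_le_right (by positivity) ?_)
      have := Real.log_nonneg hD1
      exact Real.one_le_exp (by linarith)
    · push Not at h
      refine (three_circles F c (7/5) (1 - δ) (5/4) _ _ hFd (by linarith) (by linarith)
        (by norm_num) (fun w hw => hFsmall w hw.le) hM3 z h.le (by linarith)).trans ?_
      exact interp_num l D δ _ _ hlp hD1 hδ h.le hz hM1
  have hs0 : L s1 ≠ 0 := hne s1 (by rw [hs1re]; norm_num)
  refine ⟨hs0, ?_⟩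
  have hid : iteratedDeriv 2 L s1 / L s1 = deriv F s1 + F s1 ^ 2 := by
    have hL' : DifferentiableAt ℂ (deriv L) s1 :=
      (hLd.analyticAt s1).deriv.differentiableAt
    rw [iteratedDeriv_succ, iteratedDeriv_one, hF, deriv_fun_div hL' (hLd s1) hs0]
    field_simp
    ring
  rw [hid]
  have hF1 : ‖F s1‖ ≤ P / δ := hFall s1 (by linarith)
  have hF2 : ‖deriv F s1‖ ≤ P / δ / δ := by
    refine norm_deriv_le_of_forall_mem_sphere_norm_le hδ0 ?_ ?_
    · exact (hFd.mono (closedBall_subset_ball' (by linarith))).diffContOnCl_ball subset_rfl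
    · intro z hz
      refine hFall z ((dist_triangle z s1 c).trans ?_)
      rw [mem_sphere.mp hz]; linarith
  calc ‖deriv F s1 + F s1 ^ 2‖ ≤ ‖deriv F s1‖ + ‖F s1‖ ^ 2 := by
        rw [← norm_pow]; exact norm_add_le _ _
    _ ≤ P / δ / δ + (P / δ) ^ 2 := by gcongr
    _ = (P + P ^ 2) * (64 * (1 + l) ^ 2) := by rw [hδ]; field_simp; ring
    _ ≤ (P + P ^ 2) * (64 * ((1 + 1 / l0) * l) ^ 2) := by
        gcongr
        have : 1 ≤ l / l0 := (one_le_div hl0p).mpr hll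
        have e : (1 + 1 / l0) * l = l + l / l0 := by ring
        rw [e]; linarith
    _ = (P + P ^ 2) * (64 * (1 + 1 / l0) ^ 2) * l ^ 2 := by ring
end
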